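/- Let 𝓑 be an admissible W-orbit of sets of mutually orthogonal positive roots with unique maximal element B₀, let B ∈ 𝓑, and let w ∈ W be of minimal Coxeter length among elements u ∈ W with u·B₀ = B. Then: (1) w is reduced of length s, where s is the minimal length of a strictly descending chain from B₀ to B (i.e. the minimal s such that B = r_{i_1} ⋯ r_{i_s}·B₀ with B₀ > r_{i_s}·B₀ > r_{i_{s−1}} r_{i_s}·B₀ > ⋯ > B); and (2) for every reduced expression w = r_{i_1} r_{i_2} ⋯ r_{i_s} the corresponding sequence B₀ > r_{i_s}·B₀ > r_{i_{s−1}} r_{i_s}·B₀ > ⋯ > r_{i_1} ⋯ r_{i_s}·B₀ = B is strictly descending at every step. -/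

import Mathlib

/-!
Write `B ↑ i` (`SLRS.Up`) when every root of `B` having inner product `1` with `α i` is beaten in
height by a root of `B` having inner product `-1` with `α i`, and roots of the latter kind exist.
Two orthogonal roots `x`, `y` with `⟪x, α i⟫ = 1`, `⟪y, α i⟫ = -1` make `x - y - α i` a root, so
`ht x ≠ ht y + 1` (`SLRS.gap`). This excludes ties in the height order: `B ↑ i` implies
`B < r i · B` (`SLRS.Up.lt`), and for each `i` one of `r i · B = B`, `B ↑ i`, `(r i · B) ↑ i` holds
(`SLRS.trichotomy`).

Assume `B ↑ i` and `B ↑ j`. If `⟪α i, α j⟫ = -1`, comparing the lowest roots moved by `r i` and by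
`r j` gives the ascending chain `B < r j · B < r i r j · B < r j r i r j · B`
(`SLRS.Up.adj_step₁`, `SLRS.Up.adj_step₂`). If `⟪α i, α j⟫ = 0`, then `(r j · B) ↑ i` unless `B`
contains roots `y` and `y + α i + α j`; in that case admissibility of `r j · B` gives
`r i r j · B = B` (`SLRS.Up.orth_step`).

These diamonds show, by strong induction on `k`, that if `B` is reached from `B₀` by a word of
length `k` and `B ↑ i`, then `r i · B` is reached by a shorter word (`SLRS.exists_shorter`);
maximality of `B₀` starts the induction. Hence no letter of a shortest word from `B₀` to `B` fixes
or raises the set it is applied to, so all letters strictly lower it. As each descending chain is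
also a word from `B₀` to `B`, the shortest descending chain has the length of the shortest word.
-/


open scoped InnerProductSpace

/-- A finite crystallographic simply laced root system `Φ` in a real inner
product space, normalized so that `⟪β, β⟫ = 2` for all roots, together with a
fixed base `α 1, …, α n` (the nodes of the diagram `M`), the corresponding set
`Pos` of positive roots, and the height linear functional `ht`. -/
structure SLRS (V : Type) [NormedAddCommGroup V] [InnerProductSpace ℝ V] where
  /-- the number of nodes of the diagram -/
  n : ℕ
  /-- the set of roots -/
  Φ : Set V
  /-- the set of positive roots -/
  Pos : Set V
  /-- the simple roots -/
  α : Fin n → V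
  /-- the height functional: heights are sums of coefficients on simple roots -/
  ht : V →ₗ[ℝ] ℝ
  finite : Φ.Finite
  pos_subset : Pos ⊆ Φ
  mem_pos_or_neg : ∀ β ∈ Φ, β ∈ Pos ∨ -β ∈ Pos
  not_pos_and_neg : ∀ β ∈ Pos, -β ∉ Pos
  alpha_pos : ∀ i, α i ∈ Pos
  norm_two : ∀ β ∈ Φ, ⟪β, β⟫_ℝ = 2
  inner_int : ∀ β ∈ Φ, ∀ γ ∈ Φ, ∃ z : ℤ, ⟪β, γ⟫_ℝ = (z : ℝ)
  reflect_mem : ∀ β ∈ Φ, ∀ γ ∈ Φ, β - ⟪β, γ⟫_ℝ • γ ∈ Φ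
  reduced : ∀ β ∈ Φ, ∀ t : ℝ, t • β ∈ Φ → t = 1 ∨ t = -1
  pos_coeff : ∀ β ∈ Pos, ∃ a : Fin n → ℕ, β = ∑ i, (a i : ℝ) • α i
  ht_alpha : ∀ i, ht (α i) = 1

namespace SLRS

variable {V : Type} [NormedAddCommGroup V] [InnerProductSpace ℝ V] (S : SLRS V)

/-- Adjacency of two nodes of the diagram: `i ∼ j` iff `⟪α i, α j⟫ = -1`. -/
def adj (i j : Fin S.n) : Prop := ⟪S.α i, S.α j⟫_ℝ = -1

/-- The reflection along a root `δ` (normalized so that `⟪δ, δ⟫ = 2`). -/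
def reflRoot (δ : V) : V → V := fun v => v - ⟪v, δ⟫_ℝ • δ

/-- The fundamental reflection `r i`. -/
def refl (i : Fin S.n) : V → V := reflRoot (S.α i)

/-- A set of mutually orthogonal positive roots. -/
def IsOrthoSet (B : Set V) : Prop :=
  B ⊆ S.Pos ∧ ∀ β ∈ B, ∀ γ ∈ B, β ≠ γ → ⟪β, γ⟫_ℝ = 0

/-- The action of a map `w` on a set `B` of positive roots:
`w·B = Φ⁺ ∩ {± w β : β ∈ B}`. -/
def mapSet (w : V → V) (B : Set V) : Set V :=
  {x ∈ S.Pos | ∃ β ∈ B, w β = x ∨ w β = -x}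

/-- The action of the fundamental reflection `r i` on a set of positive roots. -/
def rAct (i : Fin S.n) (B : Set V) : Set V := S.mapSet (S.refl i) B

/-- The action of the reflection along a root `δ` on a set of positive roots. -/
def reflAct (δ : V) (B : Set V) : Set V := S.mapSet (reflRoot δ) B

/-- The `W`-orbit of `B`, `W` being generated by the fundamental reflections. -/
def orbitOf (B : Set V) : Set (Set V) :=
  {C | Relation.ReflTransGen (fun X Y => ∃ i, Y = S.rAct i X) B C}

/-- `𝓑` is a `W`-orbit of sets of mutually orthogonal positive roots. -/
def IsOrbit (𝓑 : Set (Set V)) : Prop :=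
  ∃ B, S.IsOrthoSet B ∧ 𝓑 = S.orbitOf B

/-- Admissibility of a `W`-orbit of sets of mutually orthogonal positive roots. -/
def Admissible (𝓑 : Set (Set V)) : Prop :=
  S.IsOrbit 𝓑 ∧ ∀ B ∈ 𝓑, ∀ i j : Fin S.n, i ≠ j → ¬ S.adj i j →
    (∃ γ, γ ∈ B ∧ γ - S.α i + S.α j ∈ B) → S.rAct i B = S.rAct j B

/-- The height order: `B < C` iff `B ≠ C` and the minimal height of an element
of `B \ C` is smaller than the minimal height of an element of `C \ B`. -/
def lt (B C : Set V) : Prop :=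
  B ≠ C ∧ sInf (⇑S.ht '' (B \ C)) < sInf (⇑S.ht '' (C \ B))

/-- The map `V → V` determined by the word `l = [i₁, …, iₛ]`,
namely `r i₁ ∘ r i₂ ∘ ⋯ ∘ r iₛ`. -/
def wordMap (l : List (Fin S.n)) : V → V := l.foldr (fun i f => S.refl i ∘ f) id

/-- A map belongs to the Weyl group `W` iff it is realized by a word in the
fundamental reflections. -/
def InW (w : V → V) : Prop := ∃ l : List (Fin S.n), S.wordMap l = w

/-- The Coxeter length of an element of `W`: the minimal length of a word in
the fundamental reflections representing it. -/
noncomputable def len (w : V → V) : ℕ :=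
  sInf {k | ∃ l : List (Fin S.n), l.length = k ∧ S.wordMap l = w}

/-- The action of `w ∈ W` on a set of positive roots. -/
def wAct (w : V → V) (B : Set V) : Set V := S.mapSet w B

/-- `r i₁ · (r i₂ · ⋯ (r iₛ · B))` for the word `l = [i₁, …, iₛ]`. -/
def suffixAct (l : List (Fin S.n)) (B : Set V) : Set V := l.foldr S.rAct B

/-- The chain `B > r iₛ · B > r iₛ₋₁ r iₛ · B > ⋯ > r i₁ ⋯ r iₛ · B` obtained by
successively applying the letters of the word `l = [i₁, …, iₛ]` to `B` is
strictly descending at every step. -/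
def DescChain (l : List (Fin S.n)) (B : Set V) : Prop :=
  ∀ k < l.length, S.lt (S.suffixAct (l.drop k) B) (S.suffixAct (l.drop (k + 1)) B)

end SLRS

namespace SLRS

variable {V : Type} [NormedAddCommGroup V] [InnerProductSpace ℝ V] {S : SLRS V}

/-! ### Roots and heights -/

lemma neg_mem {β : V} (hβ : β ∈ S.Φ) : -β ∈ S.Φ := by
  have h := S.reflect_mem β hβ β hβ
  rw [S.norm_two β hβ, two_smul] at h
  simpa using h

lemma alpha_mem (i : Fin S.n) : S.α i ∈ S.Φ := S.pos_subset (S.alpha_pos i)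

/-- The bound is `|⟪β, γ⟫| ≤ 2`, from `‖β ± γ‖² ≥ 0`, with equality only for `γ = ±β`. -/
lemma inner_cases {β γ : V} (hβ : β ∈ S.Φ) (hγ : γ ∈ S.Φ) :
    β = γ ∨ β = -γ ∨ ⟪β, γ⟫_ℝ = -1 ∨ ⟪β, γ⟫_ℝ = 0 ∨ ⟪β, γ⟫_ℝ = 1 := by
  obtain ⟨z, hz⟩ := S.inner_int β hβ γ hγ
  have h1 : ⟪β - γ, β - γ⟫_ℝ = 4 - 2 * z := by
    rw [real_inner_sub_sub_self, S.norm_two β hβ, S.norm_two γ hγ, hz]; ring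
  have h2 : ⟪β + γ, β + γ⟫_ℝ = 4 + 2 * z := by
    rw [real_inner_add_add_self, S.norm_two β hβ, S.norm_two γ hγ, hz]; ring
  by_cases e1 : β = γ
  · exact Or.inl e1
  by_cases e2 : β = -γ
  · exact Or.inr (Or.inl e2)
  have p1 : 0 < ⟪β - γ, β - γ⟫_ℝ := real_inner_self_pos.2 (sub_ne_zero.2 e1)
  have p2 : 0 < ⟪β + γ, β + γ⟫_ℝ :=
    real_inner_self_pos.2 (fun h => e2 (eq_neg_of_add_eq_zero_left h))
  rw [h1] at p1
  rw [h2] at p2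
  have q1 : z < 2 := by
    have : (z : ℝ) < 2 := by linarith
    exact_mod_cast this
  have q2 : -2 < z := by
    have : (-2 : ℝ) < z := by linarith
    exact_mod_cast this
  rw [hz]
  obtain rfl | rfl | rfl : z = -1 ∨ z = 0 ∨ z = 1 := by omega
  all_goals simp

lemma ne_zero {β : V} (hβ : β ∈ S.Φ) : β ≠ 0 := by
  rintro rfl
  have := S.norm_two 0 hβ
  simp at this

/-- Heights of positive roots are positive integers, and height one means simple. -/
lemma ht_pos {β : V} (hβ : β ∈ S.Pos) :
    ∃ m : ℕ, 1 ≤ m ∧ S.ht β = m ∧ (m = 1 → ∃ k, β = S.α k) := by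
  obtain ⟨a, ha⟩ := S.pos_coeff β hβ
  refine ⟨∑ i, a i, ?_, ?_, ?_⟩
  · by_contra! h
    have h0 : ∑ i, a i = 0 := by omega
    rw [Finset.sum_eq_zero_iff] at h0
    apply ne_zero (S.pos_subset hβ)
    rw [ha]
    exact Finset.sum_eq_zero fun i hi => by simp [h0 i hi]
  · rw [ha, map_sum]
    simp [S.ht_alpha]
  · intro h
    obtain ⟨k, hk⟩ : ∃ k, a k ≠ 0 := by
      by_contra! h0
      simp [h0] at h
    have hsum := Finset.add_sum_erase Finset.univ a (Finset.mem_univ k)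
    have hk1 : a k = 1 := by omega
    have h0 : ∑ i ∈ Finset.univ.erase k, a i = 0 := by omega
    rw [Finset.sum_eq_zero_iff] at h0
    refine ⟨k, ?_⟩
    rw [ha, Finset.sum_eq_single k]
    · simp [hk1]
    · intro b _ hb
      simp [h0 b (by simp [hb])]
    · simp

lemma one_le_ht {β : V} (hβ : β ∈ S.Pos) : 1 ≤ S.ht β := by
  obtain ⟨m, h1, h2, -⟩ := ht_pos hβ
  rw [h2]; exact_mod_cast h1

lemma ht_int {β : V} (hβ : β ∈ S.Φ) : ∃ z : ℤ, z ≠ 0 ∧ S.ht β = z := by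
  rcases S.mem_pos_or_neg β hβ with h | h
  · obtain ⟨m, h1, h2, -⟩ := ht_pos h
    exact ⟨m, by omega, by simpa using h2⟩
  · obtain ⟨m, h1, h2, -⟩ := ht_pos h
    refine ⟨-m, by omega, ?_⟩
    rw [map_neg] at h2
    push_cast
    linarith

lemma ht_lt {x y : V} (hx : x ∈ S.Φ) (hy : y ∈ S.Φ) (h : S.ht x < S.ht y) :
    S.ht x + 1 ≤ S.ht y := by
  obtain ⟨a, -, ha⟩ := ht_int hx
  obtain ⟨b, -, hb⟩ := ht_int hy
  rw [ha, hb] at h ⊢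
  exact_mod_cast h

lemma sub_mem {x y : V} (hx : x ∈ S.Φ) (hy : y ∈ S.Φ) (h : ⟪x, y⟫_ℝ = 1) : x - y ∈ S.Φ := by
  have := S.reflect_mem x hx y hy
  rwa [h, one_smul] at this

lemma simple_inner (i j : Fin S.n) :
    S.α i = S.α j ∨ ⟪S.α i, S.α j⟫_ℝ = -1 ∨ ⟪S.α i, S.α j⟫_ℝ = 0 := by
  rcases inner_cases (alpha_mem i) (alpha_mem j) with h | h | h | h | h
  · exact Or.inl h
  · exact absurd (h ▸ S.alpha_pos i) (S.not_pos_and_neg _ (S.alpha_pos j))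
  · exact Or.inr (Or.inl h)
  · exact Or.inr (Or.inr h)
  · obtain ⟨z, h0, hz⟩ := ht_int (sub_mem (alpha_mem i) (alpha_mem j) h)
    rw [map_sub, S.ht_alpha, S.ht_alpha, sub_self] at hz
    exact absurd (by exact_mod_cast hz.symm) h0

lemma simple_inner_ne_one (i j : Fin S.n) : ⟪S.α i, S.α j⟫_ℝ ≠ 1 := by
  intro h
  rcases simple_inner i j with e | e | e
  · rw [e, S.norm_two _ (alpha_mem j)] at h; norm_num at h
  · rw [e] at h; norm_num at h
  · rw [e] at h; norm_num at h

/-- The case `β = -α i` cannot occur for a positive root. -/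
lemma pos_inner_cases {β : V} (hβ : β ∈ S.Pos) (i : Fin S.n) :
    β = S.α i ∨ ⟪β, S.α i⟫_ℝ = -1 ∨ ⟪β, S.α i⟫_ℝ = 0 ∨ ⟪β, S.α i⟫_ℝ = 1 := by
  rcases inner_cases (S.pos_subset hβ) (alpha_mem i) with h | h | h
  · exact Or.inl h
  · exact absurd (h ▸ hβ) (S.not_pos_and_neg _ (S.alpha_pos i))
  · exact Or.inr h

/-! ### The action on sets of orthogonal positive roots -/

lemma refl_def (i : Fin S.n) (v : V) : S.refl i v = v - ⟪v, S.α i⟫_ℝ • S.α i := rfl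

lemma refl_neg (i : Fin S.n) (v : V) : S.refl i (-v) = -S.refl i v := by
  simp only [refl_def, inner_neg_left, neg_smul]; abel

lemma inner_refl (i : Fin S.n) (v u : V) :
    ⟪S.refl i v, u⟫_ℝ = ⟪v, u⟫_ℝ - ⟪v, S.α i⟫_ℝ * ⟪S.α i, u⟫_ℝ := by
  rw [refl_def, inner_sub_left, real_inner_smul_left]

lemma ht_refl (i : Fin S.n) (v : V) : S.ht (S.refl i v) = S.ht v - ⟪v, S.α i⟫_ℝ := by
  rw [refl_def, map_sub, map_smul, S.ht_alpha]; simp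

lemma alpha_self (i : Fin S.n) : ⟪S.α i, S.α i⟫_ℝ = 2 := S.norm_two _ (alpha_mem i)

lemma inner_refl_alpha (i : Fin S.n) (v : V) :
    ⟪S.refl i v, S.α i⟫_ℝ = -⟪v, S.α i⟫_ℝ := by
  rw [inner_refl, alpha_self]; ring

lemma refl_refl (i : Fin S.n) (v : V) : S.refl i (S.refl i v) = v := by
  rw [refl_def i (S.refl i v), inner_refl_alpha, refl_def, neg_smul]; abel

lemma inner_refl_refl (i : Fin S.n) (v u : V) : ⟪S.refl i v, S.refl i u⟫_ℝ = ⟪v, u⟫_ℝ := by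
  rw [inner_refl, real_inner_comm, inner_refl, real_inner_comm (S.refl i u), inner_refl_alpha,
    real_inner_comm v u, real_inner_comm v (S.α i)]
  ring

lemma refl_mem (i : Fin S.n) {v : V} (hv : v ∈ S.Φ) : S.refl i v ∈ S.Φ :=
  S.reflect_mem v hv _ (alpha_mem i)

/-- If `r i β` were negative, then `β - r i β = ⟪β, α i⟫ • α i` would have height at least `2`,
whereas `⟪β, α i⟫ ≤ 1`. -/
lemma refl_pos (i : Fin S.n) {β : V} (hβ : β ∈ S.Pos) (hne : β ≠ S.α i) :
    S.refl i β ∈ S.Pos := by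
  rcases S.mem_pos_or_neg _ (refl_mem i (S.pos_subset hβ)) with h | h
  · exact h
  · have h1 := one_le_ht hβ
    have h2 := one_le_ht h
    rw [map_neg, ht_refl] at h2
    rcases pos_inner_cases hβ i with e | e | e | e
    · exact absurd e hne
    all_goals rw [e] at h2; linarith

lemma wordMap_nil : S.wordMap [] = id := rfl

lemma wordMap_cons (i : Fin S.n) (l : List (Fin S.n)) (v : V) :
    S.wordMap (i :: l) v = S.refl i (S.wordMap l v) := rfl

lemma suffixAct_cons (i : Fin S.n) (l : List (Fin S.n)) (B : Set V) :
    S.suffixAct (i :: l) B = S.rAct i (S.suffixAct l B) := rfl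

lemma wordMap_mem (l : List (Fin S.n)) {v : V} (hv : v ∈ S.Φ) : S.wordMap l v ∈ S.Φ := by
  induction l with
  | nil => exact hv
  | cons i l ih => exact refl_mem i ih

lemma suffixAct_eq (l : List (Fin S.n)) {B : Set V} (hB : B ⊆ S.Pos) :
    S.suffixAct l B = S.mapSet (S.wordMap l) B := by
  induction l with
  | nil =>
    ext x
    constructor
    · intro hx
      exact ⟨hB hx, x, hx, Or.inl rfl⟩
    · rintro ⟨hx, b, hb, h | h⟩
      · exact h ▸ hb
      · exact absurd ((show b = -x from h) ▸ hB hb) (S.not_pos_and_neg _ hx)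
  | cons i l ih =>
    rw [suffixAct_cons, ih]
    ext x
    constructor
    · rintro ⟨hx, β, ⟨-, b, hb, h | h⟩, h'⟩
      · exact ⟨hx, b, hb, by rwa [wordMap_cons, h]⟩
      · refine ⟨hx, b, hb, ?_⟩
        rw [wordMap_cons, h, refl_neg, neg_eq_iff_eq_neg, neg_inj]
        exact h'.symm
    · rintro ⟨hx, b, hb, h⟩
      rw [wordMap_cons] at h
      rcases S.mem_pos_or_neg _ (wordMap_mem l (S.pos_subset (hB hb))) with hp | hp
      · exact ⟨hx, _, ⟨hp, b, hb, Or.inl rfl⟩, h⟩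
      · refine ⟨hx, _, ⟨hp, b, hb, Or.inr (neg_neg _).symm⟩, ?_⟩
        rw [refl_neg, neg_eq_iff_eq_neg, neg_inj]
        exact h.symm

lemma suffixAct_congr {l l' : List (Fin S.n)} (h : ∀ v, S.wordMap l v = S.wordMap l' v)
    {B : Set V} (hB : B ⊆ S.Pos) : S.suffixAct l B = S.suffixAct l' B := by
  rw [suffixAct_eq l hB, suffixAct_eq l' hB, funext h]

lemma rAct_rAct (i : Fin S.n) {B : Set V} (hB : B ⊆ S.Pos) : S.rAct i (S.rAct i B) = B :=
  suffixAct_congr (l := [i, i]) (l' := []) (fun v => refl_refl i v) hB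

lemma rAct_comm {i j : Fin S.n} (h : ⟪S.α i, S.α j⟫_ℝ = 0) {B : Set V} (hB : B ⊆ S.Pos) :
    S.rAct i (S.rAct j B) = S.rAct j (S.rAct i B) := by
  refine suffixAct_congr (l := [i, j]) (l' := [j, i]) (fun v => ?_) hB
  change S.refl i (S.refl j v) = S.refl j (S.refl i v)
  have h' : ⟪S.α j, S.α i⟫_ℝ = 0 := by rw [real_inner_comm, h]
  simp only [refl_def, inner_sub_left, real_inner_smul_left, h, h']
  module

/-- The braid relation, in the form `r i r j = r j r i r j r i`. -/
lemma rAct_braid {i j : Fin S.n} (h : ⟪S.α i, S.α j⟫_ℝ = -1) {B : Set V} (hB : B ⊆ S.Pos) :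
    S.rAct i (S.rAct j B) = S.rAct j (S.rAct i (S.rAct j (S.rAct i B))) := by
  refine suffixAct_congr (l := [i, j]) (l' := [j, i, j, i]) (fun v => ?_) hB
  have h' : ⟪S.α j, S.α i⟫_ℝ = -1 := by rw [real_inner_comm, h]
  simp only [wordMap_cons, wordMap_nil, id, refl_def, inner_sub_left, real_inner_smul_left, h, h',
    alpha_self]
  module

lemma rAct_eq_image {i : Fin S.n} {B : Set V} (hB : B ⊆ S.Pos) (hi : S.α i ∉ B) :
    S.rAct i B = S.refl i '' B := by
  have hp : ∀ b ∈ B, S.refl i b ∈ S.Pos := fun b hb =>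
    refl_pos i (hB hb) (fun e => hi (e ▸ hb))
  ext x
  constructor
  · rintro ⟨hx, b, hb, h | h⟩
    · exact ⟨b, hb, h⟩
    · exact absurd (h ▸ hp b hb) (S.not_pos_and_neg _ hx)
  · rintro ⟨b, hb, rfl⟩
    exact ⟨hp b hb, b, hb, Or.inl rfl⟩

/-- A set of orthogonal roots through `α i` is fixed, since `r i` sends `α i` to `-α i` and fixes
the other roots. -/
lemma rAct_eq_self {i : Fin S.n} {B : Set V} (hB : S.IsOrthoSet B) (hi : S.α i ∈ B) :
    S.rAct i B = B := by
  have key : ∀ b ∈ B, S.refl i b = b ∨ S.refl i b = -b := by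
    intro b hb
    by_cases e : b = S.α i
    · right
      rw [e, refl_def, alpha_self, two_smul]; abel
    · left
      rw [refl_def, hB.2 b hb _ hi e]; simp
  ext x
  constructor
  · rintro ⟨hx, b, hb, h⟩
    rcases key b hb with e | e <;> rw [e] at h <;> rcases h with h | h
    · exact h ▸ hb
    · exact absurd (h ▸ hB.1 hb) (S.not_pos_and_neg _ hx)
    · exact absurd (hB.1 hb) (by rw [← neg_neg b, h]; exact S.not_pos_and_neg _ hx)
    · exact neg_inj.1 h ▸ hb
  · intro hx
    exact ⟨hB.1 hx, x, hx, key x hx⟩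

lemma ortho_rAct (i : Fin S.n) {B : Set V} (hB : S.IsOrthoSet B) :
    S.IsOrthoSet (S.rAct i B) := by
  by_cases hi : S.α i ∈ B
  · rwa [rAct_eq_self hB hi]
  refine ⟨fun x hx => hx.1, ?_⟩
  rw [rAct_eq_image hB.1 hi]
  rintro _ ⟨b, hb, rfl⟩ _ ⟨c, hc, rfl⟩ hne
  rw [inner_refl_refl]
  exact hB.2 b hb c hc (fun e => hne (by rw [e]))

lemma finite_of_ortho {B : Set V} (hB : S.IsOrthoSet B) : B.Finite :=
  S.finite.subset (hB.1.trans S.pos_subset)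

/-! ### Ascending steps -/

/-- `S.Up i B` says, for a set `B` of orthogonal positive roots, that `r i` moves some root of
`B` and that the lowest moved roots all have inner product `-1` with `α i`, hence are raised. -/
def Up (S : SLRS V) (i : Fin S.n) (B : Set V) : Prop :=
  (∃ y ∈ B, ⟪y, S.α i⟫_ℝ = -1) ∧
    ∀ x ∈ B, ⟪x, S.α i⟫_ℝ = 1 → ∃ y ∈ B, ⟪y, S.α i⟫_ℝ = -1 ∧ S.ht y < S.ht x

lemma Up.not_mem {i : Fin S.n} {B : Set V} (h : S.Up i B) (hB : S.IsOrthoSet B) :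
    S.α i ∉ B := by
  intro hi
  obtain ⟨y, hy, e⟩ := h.1
  by_cases hne : y = S.α i
  · rw [hne, alpha_self] at e; norm_num at e
  · rw [hB.2 y hy _ hi hne] at e; norm_num at e

/-- For orthogonal `x`, `y` with `⟪x, α i⟫ = 1` and `⟪y, α i⟫ = -1` the difference `x - y - α i`
is a root, so its height is a nonzero integer. If `ht y < ht x`, it is a positive root, either of
height at least `2` or simple. -/
lemma gap {B : Set V} (hB : S.IsOrthoSet B) {i : Fin S.n} {x y : V} (hx : x ∈ B) (hy : y ∈ B)
    (hxi : ⟪x, S.α i⟫_ℝ = 1) (hyi : ⟪y, S.α i⟫_ℝ = -1) (h : S.ht y < S.ht x) :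
    S.ht y + 3 ≤ S.ht x ∨ S.ht y + 2 = S.ht x ∧ ∃ k, x = y + S.α i + S.α k := by
  have hxΦ := S.pos_subset (hB.1 hx)
  have hyΦ := S.pos_subset (hB.1 hy)
  have hne : x ≠ y := by rintro rfl; exact lt_irrefl _ h
  have h1 : y + S.α i ∈ S.Φ := by
    have := refl_mem i hyΦ
    rwa [refl_def, hyi, neg_one_smul, sub_neg_eq_add] at this
  have h2 : ⟪x, y + S.α i⟫_ℝ = 1 := by
    rw [inner_add_right, hB.2 x hx y hy hne, hxi, zero_add]
  have h3 := sub_mem hxΦ h1 h2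
  have h4 := ht_lt hyΦ hxΦ h
  have h5 : S.ht (x - (y + S.α i)) = S.ht x - S.ht y - 1 := by
    rw [map_sub, map_add, S.ht_alpha]; ring
  rcases S.mem_pos_or_neg _ h3 with hp | hp
  · obtain ⟨m, hm1, hm2, hm3⟩ := ht_pos hp
    rw [h5] at hm2
    rcases Nat.lt_or_ge 1 m with hm | hm
    · left
      have : (2 : ℝ) ≤ m := by exact_mod_cast hm
      linarith
    · right
      have hm' : m = 1 := by omega
      obtain ⟨k, hk⟩ := hm3 hm'
      refine ⟨?_, k, ?_⟩
      · rw [hm'] at hm2; push_cast at hm2; linarith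
      · rw [← hk]; abel
  · have := one_le_ht hp
    rw [map_neg, h5] at this
    linarith

lemma gap_two {B : Set V} (hB : S.IsOrthoSet B) {i : Fin S.n} {x y : V} (hx : x ∈ B) (hy : y ∈ B)
    (hxi : ⟪x, S.α i⟫_ℝ = 1) (hyi : ⟪y, S.α i⟫_ℝ = -1) (h : S.ht y < S.ht x) :
    S.ht y + 2 ≤ S.ht x := by
  rcases gap hB hx hy hxi hyi h with h | h
  · linarith
  · exact h.1.le

/-- If moreover `x` and `y` are orthogonal to some `α j` with `⟪α i, α j⟫ = -1`, then
`x - y - α i` has inner product `1` with `α j` and so is not simple. -/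
lemma gap_three {B : Set V} (hB : S.IsOrthoSet B) {i j : Fin S.n} {x y : V} (hx : x ∈ B)
    (hy : y ∈ B) (hxi : ⟪x, S.α i⟫_ℝ = 1) (hyi : ⟪y, S.α i⟫_ℝ = -1) (h : S.ht y < S.ht x)
    (hij : ⟪S.α i, S.α j⟫_ℝ = -1) (hxj : ⟪x, S.α j⟫_ℝ = 0) (hyj : ⟪y, S.α j⟫_ℝ = 0) :
    S.ht y + 3 ≤ S.ht x := by
  rcases gap hB hx hy hxi hyi h with h | ⟨-, k, hk⟩
  · exact h
  · rw [hk, inner_add_left, inner_add_left, hyj, hij] at hxj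
    exact absurd (by linarith) (simple_inner_ne_one k j)

lemma Up.exists_min {i : Fin S.n} {B : Set V} (h : S.Up i B) (hB : S.IsOrthoSet B) :
    ∃ y ∈ B, ⟪y, S.α i⟫_ℝ = -1 ∧ (∀ x ∈ B, ⟪x, S.α i⟫_ℝ = 1 → S.ht y + 2 ≤ S.ht x) ∧
      ∀ x ∈ B, ⟪x, S.α i⟫_ℝ = -1 → S.ht y ≤ S.ht x := by
  obtain ⟨y, ⟨hy, hyi⟩, hmin⟩ := Set.exists_min_image {y ∈ B | ⟪y, S.α i⟫_ℝ = -1} S.ht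
    ((finite_of_ortho hB).subset (Set.sep_subset _ _)) h.1
  refine ⟨y, hy, hyi, fun x hx hxi => ?_, fun x hx hxi => hmin x ⟨hx, hxi⟩⟩
  obtain ⟨z, hz, hzi, hlt⟩ := h.2 x hx hxi
  exact gap_two hB hx hy hxi hyi ((hmin z ⟨hz, hzi⟩).trans_lt hlt)

/-- A root moved by `r i` leaves `B`, since its image is not orthogonal to it. -/
lemma refl_not_mem {i : Fin S.n} {B : Set V} (hB : S.IsOrthoSet B) {x : V} (hx : x ∈ B)
    (hxi : ⟪x, S.α i⟫_ℝ = 1 ∨ ⟪x, S.α i⟫_ℝ = -1) : S.refl i x ∉ B := by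
  intro h
  have h1 : ⟪S.refl i x, x⟫_ℝ = 1 := by
    rw [inner_refl, S.norm_two x (S.pos_subset (hB.1 hx)), real_inner_comm]
    rcases hxi with e | e <;> rw [real_inner_comm, e] <;> norm_num
  by_cases e : S.refl i x = x
  · rw [e, S.norm_two x (S.pos_subset (hB.1 hx))] at h1; norm_num at h1
  · rw [hB.2 _ h _ hx e] at h1; norm_num at h1

lemma not_mem_image {i : Fin S.n} {B : Set V} (hB : S.IsOrthoSet B) {x : V} (hx : x ∈ B)
    (hxi : ⟪x, S.α i⟫_ℝ = 1 ∨ ⟪x, S.α i⟫_ℝ = -1) : x ∉ S.refl i '' B := by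
  rintro ⟨y, hy, rfl⟩
  refine refl_not_mem hB hx hxi ?_
  rwa [refl_refl]

lemma Up.lt {i : Fin S.n} {B : Set V} (h : S.Up i B) (hB : S.IsOrthoSet B) :
    S.lt B (S.rAct i B) := by
  have hi := h.not_mem hB
  have hfin : (B \ (S.refl i '' B)).Finite := (finite_of_ortho hB).subset Set.sdiff_subset
  obtain ⟨y, hy, hyi, hmin, -⟩ := h.exists_min hB
  rw [rAct_eq_image hB.1 hi]
  refine ⟨fun e => not_mem_image hB hy (Or.inr hyi) (e ▸ hy), ?_⟩
  have hle : ∀ x ∈ B, x ∉ S.refl i '' B → sInf (⇑S.ht '' (B \ (S.refl i '' B))) ≤ S.ht x :=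
    fun x hx hx' => csInf_le (hfin.image _).bddBelow ⟨x, ⟨hx, hx'⟩, rfl⟩
  have hne : (⇑S.ht '' ((S.refl i '' B) \ B)).Nonempty :=
    ⟨_, _, ⟨⟨y, hy, rfl⟩, refl_not_mem hB hy (Or.inr hyi)⟩, rfl⟩
  have hfin' : (⇑S.ht '' ((S.refl i '' B) \ B)).Finite :=
    (((finite_of_ortho hB).image _).subset Set.sdiff_subset).image _
  obtain ⟨c, ⟨⟨x, hx, rfl⟩, hxB⟩, hc⟩ := hne.csInf_mem hfin'
  rw [← hc, ht_refl]
  rcases pos_inner_cases (hB.1 hx) i with e | e | e | e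
  · exact absurd (e ▸ hx) hi
  · have := hle x hx (not_mem_image hB hx (Or.inr e))
    rw [e]; linarith
  · refine absurd ?_ hxB
    rwa [refl_def, e, zero_smul, sub_zero]
  · have h1 := hle y hy (not_mem_image hB hy (Or.inr hyi))
    have h2 := hmin x hx e
    rw [e]; linarith

lemma trichotomy (i : Fin S.n) {B : Set V} (hB : S.IsOrthoSet B) :
    S.rAct i B = B ∨ S.Up i B ∨ S.Up i (S.rAct i B) := by
  by_cases hi : S.α i ∈ B
  · exact Or.inl (rAct_eq_self hB hi)
  by_cases hup : S.Up i B
  · exact Or.inr (Or.inl hup)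
  by_cases hx : ∃ x ∈ B, ⟪x, S.α i⟫_ℝ = 1 ∧ ∀ y ∈ B, ⟪y, S.α i⟫_ℝ = -1 → S.ht x ≤ S.ht y
  · right; right
    obtain ⟨x, hx, hxi, hle⟩ := hx
    rw [rAct_eq_image hB.1 hi]
    have hx' : ⟪S.refl i x, S.α i⟫_ℝ = -1 := by rw [inner_refl_alpha, hxi]
    refine ⟨⟨_, ⟨x, hx, rfl⟩, hx'⟩, ?_⟩
    rintro _ ⟨y, hy, rfl⟩ hyi
    refine ⟨_, ⟨x, hx, rfl⟩, hx', ?_⟩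
    rw [inner_refl_alpha] at hyi
    have := hle y hy (by linarith)
    rw [ht_refl, ht_refl, hxi]
    linarith
  · left
    push Not at hx
    have hno : ∀ x ∈ B, ⟪x, S.α i⟫_ℝ ≠ -1 := fun x hx' e => hup ⟨⟨x, hx', e⟩, hx⟩
    have hfix : ∀ x ∈ B, S.refl i x = x := by
      intro x hxB
      rcases pos_inner_cases (hB.1 hxB) i with e | e | e | e
      · exact absurd (e ▸ hxB) hi
      · exact absurd e (hno x hxB)
      · rw [refl_def, e, zero_smul, sub_zero]
      · obtain ⟨y, hy, hyi, -⟩ := hx x hxB e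
        exact absurd hyi (hno y hy)
    rw [rAct_eq_image hB.1 hi, Set.image_congr hfix, Set.image_id']

/-! ### Diamonds above a set with two ascending steps -/

/-- The inner products of a positive root with adjacent `α i`, `α j` cannot both be `-1`: the root
would be `-(α i + α j)`. -/
lemma not_both_neg {i j : Fin S.n} (hij : ⟪S.α i, S.α j⟫_ℝ = -1) {x : V} (hx : x ∈ S.Pos)
    (hi : ⟪x, S.α i⟫_ℝ = -1) : ⟪x, S.α j⟫_ℝ ≠ -1 := by
  intro hj
  have hne : x ≠ S.α i := by
    rintro rfl; rw [alpha_self] at hi; norm_num at hi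
  have h1 := refl_pos i hx hne
  have h2 : ⟪S.refl i x, S.α j⟫_ℝ = -2 := by rw [inner_refl, hij, hi, hj]; norm_num
  rcases pos_inner_cases h1 j with e | e | e | e
  · rw [e, alpha_self] at h2; norm_num at h2
  all_goals rw [e] at h2; norm_num at h2

/-- The lower of the two lowest moved roots is orthogonal to the other simple root. -/
lemma inner_eq_zero_of_lowest {i j : Fin S.n} (hij : ⟪S.α i, S.α j⟫_ℝ = -1) {B : Set V}
    (hB : S.IsOrthoSet B) (hj : S.α j ∉ B) {y z : V} (hy : y ∈ B) (hyi : ⟪y, S.α i⟫_ℝ = -1)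
    (hz : ∀ x ∈ B, ⟪x, S.α j⟫_ℝ = 1 → S.ht z + 2 ≤ S.ht x) (hle : S.ht y ≤ S.ht z) :
    ⟪y, S.α j⟫_ℝ = 0 := by
  rcases pos_inner_cases (hB.1 hy) j with e | e | e | e
  · exact absurd (e ▸ hy) hj
  · exact absurd e (not_both_neg hij (hB.1 hy) hyi)
  · exact e
  · have := hz y hy e
    linarith

lemma Up.adj_step₁ {i j : Fin S.n} (hij : ⟪S.α i, S.α j⟫_ℝ = -1) {B : Set V}
    (hB : S.IsOrthoSet B) (hi : S.Up i B) (hj : S.Up j B) : S.Up i (S.rAct j B) := by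
  have hji : ⟪S.α j, S.α i⟫_ℝ = -1 := by rw [real_inner_comm, hij]
  have hjB := hj.not_mem hB
  have hiB := hi.not_mem hB
  obtain ⟨y, hy, hyi, hy1, -⟩ := hi.exists_min hB
  obtain ⟨z, hz, hzj, hz1, -⟩ := hj.exists_min hB
  have hin : ∀ v, ⟪S.refl j v, S.α i⟫_ℝ = ⟪v, S.α i⟫_ℝ + ⟪v, S.α j⟫_ℝ := fun v => by
    rw [inner_refl, hji]; ring
  have hy0 : S.ht y ≤ S.ht z → ⟪y, S.α j⟫_ℝ = 0 := inner_eq_zero_of_lowest hij hB hjB hy hyi hz1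
  have hz0 : S.ht z ≤ S.ht y → ⟪z, S.α i⟫_ℝ = 0 := inner_eq_zero_of_lowest hji hB hiB hz hzj hy1
  rw [rAct_eq_image hB.1 hjB]
  constructor
  · rcases le_total (S.ht y) (S.ht z) with h | h
    · exact ⟨_, ⟨y, hy, rfl⟩, by rw [hin, hyi, hy0 h]; norm_num⟩
    · exact ⟨_, ⟨z, hz, rfl⟩, by rw [hin, hzj, hz0 h]; norm_num⟩
  · rintro _ ⟨x, hx, rfl⟩ hx1
    rw [hin] at hx1
    have useY : S.ht y ≤ S.ht z → S.ht y < S.ht x - ⟪x, S.α j⟫_ℝ →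
        ∃ y ∈ S.refl j '' B, ⟪y, S.α i⟫_ℝ = -1 ∧ S.ht y < S.ht (S.refl j x) := fun h h' =>
      ⟨_, ⟨y, hy, rfl⟩, by rw [hin, hyi, hy0 h]; norm_num,
        by rw [ht_refl, ht_refl, hy0 h]; linarith⟩
    have useZ : S.ht z ≤ S.ht y → S.ht z + 1 < S.ht x - ⟪x, S.α j⟫_ℝ →
        ∃ y ∈ S.refl j '' B, ⟪y, S.α i⟫_ℝ = -1 ∧ S.ht y < S.ht (S.refl j x) := fun h h' =>
      ⟨_, ⟨z, hz, rfl⟩, by rw [hin, hzj, hz0 h]; norm_num,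
        by rw [ht_refl, ht_refl, hzj]; linarith⟩
    rcases pos_inner_cases (hB.1 hx) j with e | e | e | e
    · exact absurd (e ▸ hx) hjB
    -- here `⟪x, α i⟫ = 2`, so `x = α i`
    · rw [e] at hx1
      rcases pos_inner_cases (hB.1 hx) i with f | f | f | f
      · exact absurd (f ▸ hx) hiB
      all_goals rw [f] at hx1; norm_num at hx1
    · rw [e, add_zero] at hx1
      have h2 := hy1 x hx hx1
      rcases le_or_gt (S.ht y) (S.ht z) with h | h
      · exact useY h (by rw [e]; linarith)
      · exact useZ h.le (by rw [e]; linarith)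
    · rw [e] at hx1
      have hxi : ⟪x, S.α i⟫_ℝ = 0 := by linarith
      have h2 := hz1 x hx e
      rcases le_or_gt (S.ht z) (S.ht y) with h | h
      · have := gap_three hB hx hz e hzj (by linarith) hji hxi (hz0 h)
        exact useZ h (by rw [e]; linarith)
      · exact useY h.le (by rw [e]; linarith)

lemma Up.adj_step₂ {i j : Fin S.n} (hij : ⟪S.α i, S.α j⟫_ℝ = -1) {B : Set V}
    (hB : S.IsOrthoSet B) (hi : S.Up i B) (hj : S.Up j B) :
    S.Up j (S.rAct i (S.rAct j B)) := by
  have hji : ⟪S.α j, S.α i⟫_ℝ = -1 := by rw [real_inner_comm, hij]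
  have hjB := hj.not_mem hB
  have hiB := hi.not_mem hB
  have hB' := ortho_rAct j hB
  have hiC := (Up.adj_step₁ hij hB hi hj).not_mem hB'
  obtain ⟨y, hy, hyi, hy1, -⟩ := hi.exists_min hB
  obtain ⟨z, hz, hzj, hz1, -⟩ := hj.exists_min hB
  have hin : ∀ v, ⟪S.refl i (S.refl j v), S.α j⟫_ℝ = ⟪v, S.α i⟫_ℝ := fun v => by
    rw [inner_refl, inner_refl_alpha, inner_refl, hij, hji]; ring
  have hht : ∀ v, S.ht (S.refl i (S.refl j v)) = S.ht v - ⟪v, S.α i⟫_ℝ - 2 * ⟪v, S.α j⟫_ℝ :=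
    fun v => by rw [ht_refl, ht_refl, inner_refl, hji]; ring
  rw [rAct_eq_image hB'.1 hiC]
  rw [rAct_eq_image hB.1 hjB] at hiC ⊢
  refine ⟨⟨_, ⟨_, ⟨y, hy, rfl⟩, rfl⟩, by rw [hin, hyi]⟩, ?_⟩
  rintro _ ⟨_, ⟨x, hx, rfl⟩, rfl⟩ hx1
  rw [hin] at hx1
  refine ⟨_, ⟨_, ⟨y, hy, rfl⟩, rfl⟩, by rw [hin, hyi], ?_⟩
  rw [hht, hht, hyi, hx1]
  have h2 := hy1 x hx hx1
  have hyj : ⟪y, S.α j⟫_ℝ = 0 ∨ ⟪y, S.α j⟫_ℝ = 1 := by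
    rcases pos_inner_cases (hB.1 hy) j with f | f | f
    · exact absurd (f ▸ hy) hjB
    · exact absurd f (not_both_neg hij (hB.1 hy) hyi)
    · exact f
  rcases pos_inner_cases (hB.1 hx) j with e | e | e | e
  · exact absurd (e ▸ hx) hjB
  · rcases hyj with f | f <;> rw [e, f] <;> linarith
  · rcases hyj with f | f
    · have := gap_three hB hx hy hx1 hyi (by linarith) hij e f
      rw [e, f]; linarith
    · rw [e, f]; linarith
  -- here `r j x = α i`, contrary to `(r j · B) ↑ i`
  · refine absurd ⟨x, hx, ?_⟩ hiC
    have hxj : ⟪S.refl j x, S.α i⟫_ℝ = 2 := by rw [inner_refl, hji, e, hx1]; norm_num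
    rcases pos_inner_cases (refl_pos j (hB.1 hx) (fun h => hjB (h ▸ hx))) i with g | g | g | g
    · exact g
    all_goals rw [g] at hxj; norm_num at hxj

/-- The second alternative occurs when `B` contains `y` and `x = y + α i + α j`: then
`r j · B` contains `y + α i` and `y + α j`, so admissibility applies to it. -/
lemma Up.orth_step {i j : Fin S.n} (hij : ⟪S.α i, S.α j⟫_ℝ = 0) {B : Set V}
    (hB : S.IsOrthoSet B) (hi : S.Up i B) (hj : S.Up j B)
    (hadm : (∃ γ, γ ∈ S.rAct j B ∧ γ - S.α i + S.α j ∈ S.rAct j B) →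
      S.rAct i (S.rAct j B) = S.rAct j (S.rAct j B)) :
    S.Up i (S.rAct j B) ∨ S.rAct i (S.rAct j B) = S.rAct j (S.rAct j B) := by
  have hji : ⟪S.α j, S.α i⟫_ℝ = 0 := by rw [real_inner_comm, hij]
  have hjB := hj.not_mem hB
  obtain ⟨y, hy, hyi, hy1, -⟩ := hi.exists_min hB
  have hin : ∀ v, ⟪S.refl j v, S.α i⟫_ℝ = ⟪v, S.α i⟫_ℝ := fun v => by
    rw [inner_refl, hji]; ring
  refine or_iff_not_imp_right.2 fun hne => ?_
  replace hadm := fun h => hne (hadm h)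
  clear hne
  rw [rAct_eq_image hB.1 hjB] at hadm ⊢
  refine ⟨⟨_, ⟨y, hy, rfl⟩, by rw [hin, hyi]⟩, ?_⟩
  rintro _ ⟨x, hx, rfl⟩ hx1
  rw [hin] at hx1
  refine ⟨_, ⟨y, hy, rfl⟩, by rw [hin, hyi], ?_⟩
  rw [ht_refl, ht_refl]
  have h2 := hy1 x hx hx1
  by_contra hcon
  push Not at hcon
  have hxb : ⟪x, S.α j⟫_ℝ ≤ 1 := by
    rcases pos_inner_cases (hB.1 hx) j with e | e | e | e
    · exact absurd (e ▸ hx) hjB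
    all_goals linarith
  have hyb : -1 ≤ ⟪y, S.α j⟫_ℝ := by
    rcases pos_inner_cases (hB.1 hy) j with e | e | e | e
    · exact absurd (e ▸ hy) hjB
    all_goals linarith
  have hxj : ⟪x, S.α j⟫_ℝ = 1 := by linarith
  have hyj : ⟪y, S.α j⟫_ℝ = -1 := by linarith
  rcases gap hB hx hy hx1 hyi (by linarith) with h | ⟨-, k, hk⟩
  · linarith
  · have hkj : ⟪S.α k, S.α j⟫_ℝ = 2 := by
      have := hxj
      rw [hk, inner_add_left, inner_add_left, hij, hyj] at this
      linarith
    have hkj' : S.α k = S.α j := by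
      rcases simple_inner k j with g | g | g
      · exact g
      all_goals rw [g] at hkj; norm_num at hkj
    refine hadm ⟨_, ⟨x, hx, rfl⟩, ⟨y, hy, ?_⟩⟩
    rw [refl_def, refl_def, hxj, hyj, hk, hkj']
    module

/-! ### Words from the maximal element -/

lemma rAct_mem_orbit {𝓑 : Set (Set V)} (h : S.IsOrbit 𝓑) (i : Fin S.n) {B : Set V}
    (hB : B ∈ 𝓑) : S.rAct i B ∈ 𝓑 := by
  obtain ⟨B₁, -, rfl⟩ := h
  exact Relation.ReflTransGen.tail hB ⟨i, rfl⟩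

lemma ortho_of_mem_orbit {𝓑 : Set (Set V)} (h : S.IsOrbit 𝓑) {B : Set V}
    (hB : B ∈ 𝓑) : S.IsOrthoSet B := by
  obtain ⟨B₁, h₁, rfl⟩ := h
  change Relation.ReflTransGen _ _ _ at hB
  induction hB with
  | refl => exact h₁
  | tail _ hs ih =>
    obtain ⟨i, rfl⟩ := hs
    exact ortho_rAct i ih

lemma suffixAct_mem_orbit {𝓑 : Set (Set V)} (h : S.IsOrbit 𝓑) {B : Set V}
    (hB : B ∈ 𝓑) (l : List (Fin S.n)) : S.suffixAct l B ∈ 𝓑 := by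
  induction l with
  | nil => exact hB
  | cons i l ih => exact rAct_mem_orbit h i ih

/-- `B` is reached from `B₀` by a word of length `k`. -/
def Reach (S : SLRS V) (B₀ : Set V) (k : ℕ) (B : Set V) : Prop :=
  ∃ l : List (Fin S.n), l.length = k ∧ S.suffixAct l B₀ = B

lemma Reach.step {B₀ B : Set V} {k : ℕ} (h : S.Reach B₀ k B) (i : Fin S.n) :
    S.Reach B₀ (k + 1) (S.rAct i B) := by
  obtain ⟨l, rfl, rfl⟩ := h
  exact ⟨i :: l, rfl, rfl⟩

/-- Ascending brings a set strictly closer to `B₀` in word length. -/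
lemma exists_shorter {𝓑 : Set (Set V)} (hadm : S.Admissible 𝓑) {B₀ : Set V} (hB₀ : B₀ ∈ 𝓑)
    (hmax : ∀ C ∈ 𝓑, ¬ S.lt B₀ C) (k : ℕ) :
    ∀ B, S.Reach B₀ k B → ∀ i, S.Up i B → ∃ m < k, S.Reach B₀ m (S.rAct i B) := by
  induction k using Nat.strong_induction_on with
  | _ k ih =>
  intro B hR i hi
  by_cases hsh : ∃ m < k, S.Reach B₀ m B
  · obtain ⟨m, hm, hR'⟩ := hsh
    obtain ⟨m', hm', h⟩ := ih m hm B hR' i hi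
    exact ⟨m', hm'.trans hm, h⟩
  obtain ⟨l, rfl, rfl⟩ := hR
  cases l with
  | nil =>
    exact absurd (hi.lt (ortho_of_mem_orbit hadm.1 hB₀)) (hmax _ (rAct_mem_orbit hadm.1 i hB₀))
  | cons j l =>
    rw [suffixAct_cons] at hi hsh ⊢
    have hC𝓑 : S.suffixAct l B₀ ∈ 𝓑 := suffixAct_mem_orbit hadm.1 hB₀ l
    have hRC : S.Reach B₀ l.length (S.suffixAct l B₀) := ⟨l, rfl, rfl⟩
    generalize S.suffixAct l B₀ = C at *
    generalize hk' : l.length = k' at *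
    rw [List.length_cons, hk'] at ih hsh ⊢
    have hC := ortho_of_mem_orbit hadm.1 hC𝓑
    have hBo := ortho_rAct j hC
    have hCB : S.rAct j (S.rAct j C) = C := rAct_rAct j hC.1
    have hj : S.Up j (S.rAct j C) := by
      rcases trichotomy j hC with h | h | h
      · exact absurd ⟨k', by omega, by rwa [h]⟩ hsh
      · obtain ⟨m, hm, h'⟩ := ih k' (by omega) C hRC j h
        exact absurd ⟨m, by omega, h'⟩ hsh
      · exact h
    rcases simple_inner i j with e | e | e
    · refine ⟨k', by omega, ?_⟩
      have : S.rAct i (S.rAct j C) = S.rAct j (S.rAct j C) := by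
        simp only [rAct, refl, e]
      rwa [this, hCB]
    · have h1 := Up.adj_step₁ e hBo hi hj
      have h2 := Up.adj_step₂ e hBo hi hj
      rw [hCB] at h1 h2
      obtain ⟨m₁, hm₁, hR₁⟩ := ih k' (by omega) C hRC i h1
      obtain ⟨m₂, hm₂, hR₂⟩ := ih m₁ (by omega) _ hR₁ j h2
      refine ⟨m₂ + 1 + 1, by omega, ?_⟩
      rw [rAct_braid e hC.1]
      exact (hR₂.step i).step j
    · have hne : i ≠ j := by
        rintro rfl; rw [alpha_self] at e; norm_num at e
      have hna : ¬ S.adj i j := by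
        intro h
        have h' : ⟪S.α i, S.α j⟫_ℝ = -1 := h
        rw [e] at h'; norm_num at h'
      have h := Up.orth_step e hBo hi hj (by
        rw [hCB]; exact hadm.2 C hC𝓑 i j hne hna)
      rw [hCB] at h
      rcases h with h | h
      · obtain ⟨m, hm, hR⟩ := ih k' (by omega) C hRC i h
        refine ⟨m + 1, by omega, ?_⟩
        rw [rAct_comm e hC.1]
        exact hR.step j
      · refine ⟨k', by omega, ?_⟩
        rw [← h, rAct_rAct i hC.1]
        exact hRC

lemma descChain_of_shortest {𝓑 : Set (Set V)} (hadm : S.Admissible 𝓑) {B₀ : Set V}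
    (hB₀ : B₀ ∈ 𝓑) (hmax : ∀ C ∈ 𝓑, ¬ S.lt B₀ C) (l : List (Fin S.n))
    (hl : ∀ m, S.Reach B₀ m (S.suffixAct l B₀) → l.length ≤ m) : S.DescChain l B₀ := by
  induction l with
  | nil => intro k hk; simp at hk
  | cons i l ih =>
    rw [suffixAct_cons] at hl
    have hC := ortho_of_mem_orbit hadm.1 (suffixAct_mem_orbit hadm.1 hB₀ l)
    intro k hk
    cases k with
    | zero =>
      change S.lt (S.rAct i (S.suffixAct l B₀)) (S.suffixAct l B₀)
      have hR : S.Reach B₀ l.length (S.suffixAct l B₀) := ⟨l, rfl, rfl⟩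
      rcases trichotomy i hC with h | h | h
      · have := hl l.length (by rwa [h])
        simp at this
      · obtain ⟨m, hm, h'⟩ := exists_shorter hadm hB₀ hmax _ _ hR i h
        have := hl m h'
        simp at this
        omega
      · have := h.lt (ortho_rAct i hC)
        rwa [rAct_rAct i hC.1] at this
    | succ k =>
      refine ih (fun m hm => ?_) k (by simpa using hk)
      have := hl _ (hm.step i)
      simpa using this

end SLRS

open SLRS

variable {V : Type} [NormedAddCommGroup V] [InnerProductSpace ℝ V]

/-- Lemma 3.7: let `B₀` be the unique maximal element of an
admissible orbit `𝓑`, `B ∈ 𝓑`, and `w` of minimal Coxeter length among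
elements of `W` with `w · B₀ = B`. Then (1) `ℓ(w)` equals the minimal length of
a strictly descending chain from `B₀` to `B`, and (2) every reduced expression
for `w` yields a strictly descending chain from `B₀` to `B`. -/
theorem minimal_word_desc_chain (S : SLRS V) (𝓑 : Set (Set V))
    (hadm : S.Admissible 𝓑) (B₀ : Set V) (hB₀ : B₀ ∈ 𝓑)
    (hmax : ∀ C ∈ 𝓑, ¬ S.lt B₀ C)
    (huniq : ∀ C ∈ 𝓑, (∀ D ∈ 𝓑, ¬ S.lt C D) → C = B₀)
    (B : Set V) (hB : B ∈ 𝓑) (w : V → V) (hw : S.InW w)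
    (hwB : S.wAct w B₀ = B)
    (hmin : ∀ u, S.InW u → S.wAct u B₀ = B → S.len w ≤ S.len u) :
    S.len w = sInf {k | ∃ l : List (Fin S.n),
      l.length = k ∧ S.suffixAct l B₀ = B ∧ S.DescChain l B₀} ∧
    ∀ l : List (Fin S.n), S.wordMap l = w → l.length = S.len w →
      S.suffixAct l B₀ = B ∧ S.DescChain l B₀ := by
  have hpos : B₀ ⊆ S.Pos := (ortho_of_mem_orbit hadm.1 hB₀).1
  have hle : ∀ l : List (Fin S.n), S.suffixAct l B₀ = B → S.len w ≤ l.length := by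
    intro l hl
    rw [suffixAct_eq l hpos] at hl
    exact (hmin _ ⟨l, rfl⟩ hl).trans (Nat.sInf_le ⟨l, rfl, rfl⟩)
  have h2 : ∀ l : List (Fin S.n), S.wordMap l = w → l.length = S.len w →
      S.suffixAct l B₀ = B ∧ S.DescChain l B₀ := by
    intro l hl hlen
    have hB' : S.suffixAct l B₀ = B := by
      rw [suffixAct_eq l hpos, hl]; exact hwB
    refine ⟨hB', descChain_of_shortest hadm hB₀ hmax l ?_⟩
    rintro _ ⟨l', rfl, hl'⟩
    rw [hlen]
    exact hle l' (hl'.trans hB')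
  refine ⟨?_, h2⟩
  obtain ⟨l, hlen, hl⟩ : S.len w ∈ {k | ∃ l : List (Fin S.n), l.length = k ∧ S.wordMap l = w} := by
    obtain ⟨l, hl⟩ := hw
    exact Nat.sInf_mem ⟨l.length, l, rfl, hl⟩
  have hmem := h2 l hl hlen
  refine le_antisymm (le_csInf ⟨_, l, hlen, hmem.1, hmem.2⟩ ?_) (Nat.sInf_le ⟨l, hlen, hmem⟩)
  rintro _ ⟨l', rfl, hl', -⟩
  exact hle l' hl'
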